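/- arXiv:1407.3463 — 3 statements merged into one kernel-verified Lean document; each statement's English description precedes it below -/
import Mathlib

section
/- Let D = diag(d₁²,…,dₙ²) with d₁² ≥ d₂² ≥ ⋯ ≥ dₙ² ≥ 0, let f ∈ 𝓤, and define 𝒥 : ℝ^{n×r} → ℝ by 𝒥(U) = Σ_{i=1}^{n} f(σᵢ), where σ₁,…,σₙ are the generalized eigenvalues of the pencil (U Uᵀ + I, D + I). If d₁² > d₂² > ⋯ > d_r² > d_{r+1}², then every global minimizer Û of 𝒥 satisfies Û Ûᵀ = Σ_{i=1}^{r} dᵢ² eᵢ eᵢᵀ, where e₁,…,eₙ are the standard basis vectors of ℝⁿ. -/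
open Matrix Finset

/-- `σ` enumerates (with multiplicity) the generalized eigenvalues of the pencil `(A, B)`,
i.e. the eigenvalues of `B⁻¹ * A`. -/
def IsGenEigs {n : ℕ} (A B : Matrix (Fin n) (Fin n) ℝ) (σ : Fin n → ℝ) : Prop :=
  (B⁻¹ * A).charpoly = ∏ i : Fin n, (Polynomial.X - Polynomial.C (σ i))

/-- Membership in the class 𝓤. -/
def MemU (f : ℝ → ℝ) : Prop :=
  ∃ f' : ℝ → ℝ,
    (∀ x ∈ Set.Ioi (0:ℝ), HasDerivAt f (f' x) x) ∧
    ContinuousOn f' (Set.Ioi (0:ℝ)) ∧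
    (∀ x ∈ Set.Ioi (0:ℝ), x ≠ 1 → f' x * (1 - x) < 0) ∧
    Filter.Tendsto f Filter.atTop Filter.atTop

/-!
Congruence by `(D + 1)^(-1/2)` turns the pencil `(U Uᵀ + 1, D + 1)` into the symmetric matrix
`diag(c) + E`, where `cᵢ = (dᵢ² + 1)⁻¹ ≤ 1` and `E ≥ 0` has rank at most `r`. By Weyl's interlacing
inequalities its increasingly ordered eigenvalues satisfy `λₖ ≤ c_{k+r}`. As `f` is strictly
decreasing on `(0, 1]` and minimal at `1`, the sum of the `f(λₖ)` is least only when the spectrum is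
`1, …, 1, c_{r+1}, …, cₙ`, and this value is attained.

Now let `P` be an orthogonal projection of rank `n - r` that annihilates `E`. Ky Fan's inequality
bounds `tr(P (diag(c) + E)) = tr(P diag(c))` below by the sum of the `n - r` least eigenvalues,
which is `c_{r+1} + ⋯ + cₙ`. These are also the `n - r` largest entries of `c`, with a gap above the
remaining ones, so `P` is the projection onto the last `n - r` coordinates and `E` vanishes in the
corresponding rows. Hence `diag(c) + E` and the diagonal matrix `S` of its eigenvalues have the same
diagonal entries wherever `S` differs from `1`, and the trace identities force them to be equal.
-/

section

variable {ι : Type*}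

lemma sum_sub_ite_mul_sub [Fintype ι] [DecidableEq ι] {p : ι → ℝ} {S : Finset ι}
    (hsum : ∑ i, p i = #S) (w : ι → ℝ) (θ : ℝ) :
    ∑ i, (p i - if i ∈ S then 1 else 0) * (w i - θ) = ∑ i, p i * w i - ∑ i ∈ S, w i := by
  simp [sub_mul, mul_sub, ← sum_mul, hsum]

lemma sub_ite_mul_sub_nonpos [DecidableEq ι] {p w : ι → ℝ} {S : Finset ι} {θ : ℝ}
    (hp : ∀ i, p i ∈ Set.Icc 0 1) (hS : ∀ i ∈ S, θ ≤ w i) (hSc : ∀ i ∉ S, w i ≤ θ) (i : ι) :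
    (p i - if i ∈ S then 1 else 0) * (w i - θ) ≤ 0 := by
  split_ifs with hi
  · exact mul_nonpos_of_nonpos_of_nonneg (sub_nonpos.2 (hp i).2) (sub_nonneg.2 (hS i hi))
  · exact mul_nonpos_of_nonneg_of_nonpos (by simpa using (hp i).1) (sub_nonpos.2 (hSc i hi))

lemma sum_mul_le_sum_of_threshold [Fintype ι] {p w : ι → ℝ} {S : Finset ι} {θ : ℝ}
    (hp : ∀ i, p i ∈ Set.Icc 0 1) (hsum : ∑ i, p i = #S) (hS : ∀ i ∈ S, θ ≤ w i)
    (hSc : ∀ i ∉ S, w i ≤ θ) : ∑ i, p i * w i ≤ ∑ i ∈ S, w i := by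
  classical
  exact sub_nonpos.1 <| (sum_sub_ite_mul_sub hsum w θ).symm.trans_le <|
    sum_nonpos fun i _ ↦ sub_ite_mul_sub_nonpos hp hS hSc i

lemma eq_one_of_sum_le_sum_mul [Fintype ι] {p w : ι → ℝ} {S : Finset ι} {θ : ℝ}
    (hp : ∀ i, p i ∈ Set.Icc 0 1) (hsum : ∑ i, p i = #S) (hS : ∀ i ∈ S, θ ≤ w i)
    (hSc : ∀ i ∉ S, w i < θ) (h : ∑ i ∈ S, w i ≤ ∑ i, p i * w i) : ∀ i ∈ S, p i = 1 := by
  classical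
  have hterm := sub_ite_mul_sub_nonpos hp hS fun i hi ↦ (hSc i hi).le
  have hzero : ∑ i, (p i - if i ∈ S then 1 else 0) * (w i - θ) = 0 :=
    (sum_nonpos fun i _ ↦ hterm i).antisymm <| by
      rw [sum_sub_ite_mul_sub hsum]
      exact sub_nonneg.2 h
  have hoff (i) (hi : i ∉ S) : p i = 0 := by
    have hi' := (sum_eq_zero_iff_of_nonpos fun i _ ↦ hterm i).1 hzero i (mem_univ i)
    simpa [hi, sub_ne_zero.2 (hSc i hi).ne] using hi'
  have hsumS : ∑ i ∈ S, p i = ∑ i ∈ S, 1 := by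
    rw [sum_subset (subset_univ S) fun i _ hi ↦ hoff i hi, hsum]
    simp
  exact (sum_eq_sum_iff_of_le fun i _ ↦ (hp i).2).1 hsumS

end

lemma exists_ne_zero_of_card_add_rank_add_card_lt {K ι κ₁ κ₂ κ₃ : Type*} [Field K]
    [Fintype ι] {A : Matrix κ₁ ι K} {M : Matrix κ₂ ι K} {N : Matrix κ₃ ι K} {s : Finset κ₂}
    {t : Finset κ₃} (h : #s + A.rank + #t < Fintype.card ι) :
    ∃ x ≠ 0, (∀ i ∈ s, (M *ᵥ x) i = 0) ∧ A *ᵥ x = 0 ∧ ∀ i ∈ t, (N *ᵥ x) i = 0 := by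
  let L : (ι → K) →ₗ[K] (s → K) × LinearMap.range A.mulVecLin × (t → K) :=
    (LinearMap.funLeft K K Subtype.val ∘ₗ M.mulVecLin).prod <|
      A.mulVecLin.rangeRestrict.prod <| LinearMap.funLeft K K Subtype.val ∘ₗ N.mulVecLin
  obtain ⟨x, hx, hx0⟩ := Submodule.exists_mem_ne_zero_of_ne_bot <|
    L.ker_ne_bot_of_finrank_lt <| by simpa [Matrix.rank, ← add_assoc] using h
  exact ⟨x, hx0, fun i hi ↦ congrFun (congrArg Prod.fst hx) ⟨i, hi⟩,
    congrArg (fun z ↦ z.2.1.1) hx, fun i hi ↦ congrFun (congrArg (fun z ↦ z.2.2) hx) ⟨i, hi⟩⟩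

section
open scoped ComplexOrder MatrixOrder

variable {𝕜 ι : Type*} [RCLike 𝕜] [Fintype ι]

lemma re_apply_self_mem_Icc_of_isStarProjection {P : Matrix ι ι 𝕜} (hP : IsStarProjection P)
    (i : ι) : RCLike.re (P i i) ∈ Set.Icc 0 1 := by
  classical
  have h0 : 0 ≤ P i i := (nonneg_iff_posSemidef.1 hP.nonneg).diag_nonneg
  have h1 : 0 ≤ (1 - P) i i := (nonneg_iff_posSemidef.1 hP.one_sub.nonneg).diag_nonneg
  refine ⟨(RCLike.nonneg_iff.1 h0).1, ?_⟩
  simpa using (RCLike.nonneg_iff.1 h1).1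

omit [Fintype ι] in
lemma apply_eq_zero_of_posSemidef_of_apply_self_eq_zero [Finite ι] {A : Matrix ι ι 𝕜}
    (hA : A.PosSemidef) {i : ι} (hi : A i i = 0) (j : ι) : A i j = 0 := by
  classical
  have := Fintype.ofFinite ι
  have hcol : A *ᵥ Pi.single i 1 = 0 :=
    (hA.dotProduct_mulVec_zero_iff _).1 (by simp [hi])
  have hji : A j i = 0 := by simpa using congrFun hcol j
  rw [← hA.isHermitian.apply, hji, star_zero]

lemma apply_eq_zero_of_isStarProjection_of_mul_eq_zero {κ : Type*} {P : Matrix ι ι 𝕜}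
    (hP : IsStarProjection P) {i : ι} (hi : RCLike.re (P i i) = 1) {E : Matrix ι κ 𝕜}
    (hE : P * E = 0) (j : κ) : E i j = 0 := by
  classical
  have hQ : (1 - P).PosSemidef := nonneg_iff_posSemidef.1 hP.one_sub.nonneg
  have hQii : (1 - P) i i = 0 := by
    rw [← hQ.isHermitian.coe_re_apply_self]
    simp [hi]
  have hQE : (1 - P) * E = E := by rw [Matrix.sub_mul, Matrix.one_mul, hE, sub_zero]
  rw [← hQE, mul_apply]
  exact sum_eq_zero fun k _ ↦ by
    rw [apply_eq_zero_of_posSemidef_of_apply_self_eq_zero hQ hQii, zero_mul]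

end

section
open Polynomial
open scoped ComplexOrder MatrixOrder

variable {𝕜 ι : Type*} [RCLike 𝕜] [Fintype ι] [DecidableEq ι]

lemma trace_conjStarAlgAut (Q : unitaryGroup ι 𝕜) (A : Matrix ι ι 𝕜) :
    (Unitary.conjStarAlgAut 𝕜 _ Q A).trace = A.trace := by
  rw [Unitary.conjStarAlgAut_apply, trace_mul_cycle, Unitary.coe_star_mul_self, one_mul]

lemma exists_conjStarAlgAut_eq_of_charpoly_eq {A B : Matrix ι ι 𝕜} (hA : A.IsHermitian)
    (hB : B.IsHermitian) (h : A.charpoly = B.charpoly) :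
    ∃ Q : unitaryGroup ι 𝕜, Unitary.conjStarAlgAut 𝕜 _ Q B = A := by
  refine ⟨hA.eigenvectorUnitary * star hB.eigenvectorUnitary, ?_⟩
  rw [Unitary.conjStarAlgAut_mul_apply, hB.conjStarAlgAut_star_eigenvectorUnitary,
    ← (hA.eigenvalues_eq_eigenvalues_iff hB).2 h, ← hA.spectral_theorem]

omit [Fintype ι] in
lemma isHermitian_diagonal_ofReal (a : ι → ℝ) : (diagonal fun i ↦ (a i : 𝕜)).IsHermitian :=
  isHermitian_diagonal_of_self_adjoint _ <| funext fun _ ↦ RCLike.conj_ofReal _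

lemma exists_conjStarAlgAut_diagonal_eq {A : Matrix ι ι 𝕜} (hA : A.IsHermitian) {a : ι → ℝ}
    (h : A.charpoly = ∏ i, (X - C (a i : 𝕜))) :
    ∃ Q : unitaryGroup ι 𝕜, Unitary.conjStarAlgAut 𝕜 _ Q (diagonal fun i ↦ (a i : 𝕜)) = A :=
  exists_conjStarAlgAut_eq_of_charpoly_eq hA (isHermitian_diagonal_ofReal a) <| by
    rw [h, charpoly_diagonal]

lemma pos_of_posDef_of_charpoly_eq {A : Matrix ι ι 𝕜} (hA : A.PosDef) {a : ι → ℝ}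
    (h : A.charpoly = ∏ i, (X - C (a i : 𝕜))) (i : ι) : 0 < a i := by
  obtain ⟨Q, rfl⟩ := exists_conjStarAlgAut_diagonal_eq hA.isHermitian h
  rw [Unitary.conjStarAlgAut_apply, IsUnit.posDef_star_right_conjugate_iff Unitary.isUnit_coe,
    posDef_diagonal_iff] at hA
  exact RCLike.ofReal_pos.1 (hA i)

lemma exists_monotone_charpoly_eq {n : ℕ} {A : Matrix (Fin n) (Fin n) 𝕜} (hA : A.IsHermitian) :
    ∃ a : Fin n → ℝ, Monotone a ∧ A.charpoly = ∏ i, (X - C (a i : 𝕜)) :=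
  ⟨_, Tuple.monotone_sort hA.eigenvalues, hA.charpoly_eq.trans
    (Equiv.prod_comp (Tuple.sort hA.eigenvalues) fun i ↦ X - C (hA.eigenvalues i : 𝕜)).symm⟩

lemma re_dotProduct_conjStarAlgAut_diagonal_mulVec (Q : unitaryGroup ι 𝕜) (a : ι → ℝ) (x : ι → 𝕜) :
    RCLike.re (star x ⬝ᵥ Unitary.conjStarAlgAut 𝕜 _ Q (diagonal fun i ↦ (a i : 𝕜)) *ᵥ x) =
      ∑ i, a i * ‖((star Q : Matrix ι ι 𝕜) *ᵥ x) i‖ ^ 2 := by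
  have hx : star x ᵥ* (Q : Matrix ι ι 𝕜) = star ((star Q : Matrix ι ι 𝕜) *ᵥ x) := by
    rw [star_mulVec, ← star_eq_conjTranspose, star_star]
  rw [Unitary.conjStarAlgAut_apply, ← mulVec_mulVec, ← mulVec_mulVec, dotProduct_mulVec, hx,
    dotProduct, map_sum]
  refine sum_congr rfl fun i _ ↦ ?_
  rw [mulVec_diagonal, Pi.star_apply, mul_left_comm, RCLike.star_def, RCLike.conj_mul,
    RCLike.re_ofReal_mul]
  norm_cast

lemma sum_norm_sq_star_mulVec (Q : unitaryGroup ι 𝕜) (x : ι → 𝕜) :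
    ∑ i, ‖((star Q : Matrix ι ι 𝕜) *ᵥ x) i‖ ^ 2 = ∑ i, ‖x i‖ ^ 2 := by
  have h (U : unitaryGroup ι 𝕜) := re_dotProduct_conjStarAlgAut_diagonal_mulVec U 1 x
  simp only [Pi.one_apply, diagonal_one, map_one, one_mul] at h
  simpa using (h Q).symm.trans (h 1)

lemma le_of_card_add_rank_sub_add_card_lt {A B : Matrix ι ι 𝕜} (hA : A.IsHermitian)
    (hB : B.IsHermitian) {a b : ι → ℝ} (ha : A.charpoly = ∏ i, (X - C (a i : 𝕜)))
    (hb : B.charpoly = ∏ i, (X - C (b i : 𝕜))) {α β : ℝ}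
    (hcard : #{i | a i < α} + (A - B).rank + #{i | β < b i} < Fintype.card ι) : α ≤ β := by
  obtain ⟨Q, hQ⟩ := exists_conjStarAlgAut_diagonal_eq hA ha
  obtain ⟨W, hW⟩ := exists_conjStarAlgAut_diagonal_eq hB hb
  obtain ⟨x, hx0, hQx, hABx, hWx⟩ := exists_ne_zero_of_card_add_rank_add_card_lt
    (M := (star Q : Matrix ι ι 𝕜)) (N := (star W : Matrix ι ι 𝕜)) hcard
  rw [sub_mulVec, sub_eq_zero] at hABx
  simp only [mem_filter_univ] at hQx hWx
  have hpos : 0 < ∑ i, ‖x i‖ ^ 2 := by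
    obtain ⟨i, hi⟩ := Function.ne_iff.1 hx0
    exact sum_pos' (fun _ _ ↦ sq_nonneg _) ⟨i, mem_univ i, pow_pos (norm_pos_iff.2 hi) 2⟩
  refine le_of_mul_le_mul_right ?_ hpos
  calc α * ∑ i, ‖x i‖ ^ 2
      = ∑ i, α * ‖((star Q : Matrix ι ι 𝕜) *ᵥ x) i‖ ^ 2 := by
        rw [← mul_sum, sum_norm_sq_star_mulVec]
    _ ≤ ∑ i, a i * ‖((star Q : Matrix ι ι 𝕜) *ᵥ x) i‖ ^ 2 := by
        refine sum_le_sum fun i _ ↦ ?_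
        rcases lt_or_ge (a i) α with h | h
        · simp [hQx i h]
        · gcongr
    _ = ∑ i, b i * ‖((star W : Matrix ι ι 𝕜) *ᵥ x) i‖ ^ 2 := by
        rw [← re_dotProduct_conjStarAlgAut_diagonal_mulVec, hQ, hABx, ← hW,
          re_dotProduct_conjStarAlgAut_diagonal_mulVec]
    _ ≤ ∑ i, β * ‖((star W : Matrix ι ι 𝕜) *ᵥ x) i‖ ^ 2 := by
        refine sum_le_sum fun i _ ↦ ?_
        rcases lt_or_ge β (b i) with h | h
        · simp [hWx i h]
        · gcongr
    _ = β * ∑ i, ‖x i‖ ^ 2 := by rw [← mul_sum, sum_norm_sq_star_mulVec]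

lemma eigenvalue_le_eigenvalue_of_add_rank_sub_le {n : ℕ} {A B : Matrix (Fin n) (Fin n) 𝕜}
    (hA : A.IsHermitian) (hB : B.IsHermitian) {a b : Fin n → ℝ}
    (ha : A.charpoly = ∏ i, (X - C (a i : 𝕜))) (hb : B.charpoly = ∏ i, (X - C (b i : 𝕜)))
    (ha_mono : Monotone a) (hb_mono : Monotone b) {i j : Fin n}
    (hij : i + (A - B).rank ≤ j) : a i ≤ b j := by
  refine le_of_card_add_rank_sub_add_card_lt hA hB ha hb ?_
  have hi : #{k | a k < a i} ≤ i := by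
    simpa using card_le_card (t := Iio i) fun k hk ↦
      mem_Iio.2 (ha_mono.reflect_lt ((mem_filter_univ k).1 hk))
  have hj : #{k | b j < b k} ≤ n - 1 - j := by
    simpa using card_le_card (t := Ioi j) fun k hk ↦
      mem_Ioi.2 (hb_mono.reflect_lt ((mem_filter_univ k).1 hk))
  have := j.2
  rw [Fintype.card_fin]
  lia

omit [DecidableEq ι] in
lemma exists_isStarProjection_mul_eq_zero {A : Matrix ι ι 𝕜} (hA : A.IsHermitian) {m : ℕ}
    (hm : m + A.rank ≤ Fintype.card ι) :
    ∃ P : Matrix ι ι 𝕜, IsStarProjection P ∧ P * A = 0 ∧ P.trace = m := by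
  classical
  have hcard : m ≤ #{i | hA.eigenvalues i = 0} := by
    have := card_filter_add_card_filter_not (s := univ) fun i ↦ hA.eigenvalues i = 0
    rw [hA.rank_eq_card_non_zero_eigs, Fintype.card_subtype] at hm
    rw [card_univ] at this
    lia
  obtain ⟨T, hT, rfl⟩ := exists_subset_card_eq hcard
  let φ := Unitary.conjStarAlgAut 𝕜 (Matrix ι ι 𝕜) hA.eigenvectorUnitary
  have hproj : IsStarProjection (diagonal fun i ↦ if i ∈ T then (1 : 𝕜) else 0) := by
    refine ⟨?_, isHermitian_diagonal_of_self_adjoint _ <| funext fun i ↦ ?_⟩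
    · simp [IsIdempotentElem]
    · simp [apply_ite]
  refine ⟨φ (diagonal fun i ↦ if i ∈ T then 1 else 0), hproj.map φ, ?_, ?_⟩
  · conv_lhs => rw [hA.spectral_theorem]
    rw [← map_mul, diagonal_mul_diagonal, map_eq_zero_iff φ φ.injective, diagonal_eq_zero]
    ext i
    by_cases hi : i ∈ T
    · simpa [hi] using hT hi
    · simp [hi]
  · rw [trace_conjStarAlgAut, trace_diagonal]
    simp

lemma eq_diagonal_of_charpoly_eq {A : Matrix ι ι 𝕜} (hA : A.IsHermitian) {s : ι → ℝ}
    (h : A.charpoly = ∏ i, (X - C (s i : 𝕜))) {μ : ℝ} (hdiag : ∀ i, s i ≠ μ → A i i = s i) :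
    A = diagonal fun i ↦ (s i : 𝕜) := by
  set D : Matrix ι ι 𝕜 := diagonal fun i ↦ (s i : 𝕜) with hD
  obtain ⟨Q, hQ⟩ := exists_conjStarAlgAut_diagonal_eq hA h
  have htr : A.trace = D.trace := by rw [← hQ, trace_conjStarAlgAut]
  have htr_sq : (A * A).trace = (D * D).trace := by rw [← hQ, ← map_mul, trace_conjStarAlgAut]
  have hcross : ((A - D) * D).trace = 0 := calc
    ((A - D) * D).trace = ∑ i, (A i i - s i) * s i := by simp [trace, hD]
    _ = ∑ i, (A i i - s i) * μ := by
      refine sum_congr rfl fun i _ ↦ ?_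
      rcases eq_or_ne (s i) μ with hi | hi
      · rw [hi]
      · rw [hdiag i hi, sub_self, zero_mul, zero_mul]
    _ = (A.trace - D.trace) * μ := by
      rw [← sum_mul, sum_sub_distrib, hD, trace_diagonal]
      rfl
    _ = 0 := by rw [htr, sub_self, zero_mul]
  have hherm : (A - D).IsHermitian := hA.sub (isHermitian_diagonal_ofReal s)
  -- `A - D` is orthogonal to `D`, so its squared Frobenius norm is `tr A² - tr D²`.
  have hzero : ((A - D) * (A - D)ᴴ).trace = 0 := by
    have hDA : (D * A).trace = (D * D).trace := by
      rwa [sub_mul, trace_sub, sub_eq_zero, trace_mul_comm] at hcross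
    rw [hherm.eq, mul_sub, trace_sub, hcross, sub_mul, trace_sub, htr_sq, hDA, sub_self, sub_zero]
  exact sub_eq_zero.1 (trace_mul_conjTranspose_self_eq_zero_iff.1 hzero)

lemma re_trace_mul_diagonal (A : Matrix ι ι 𝕜) (a : ι → ℝ) :
    RCLike.re (A * diagonal fun i ↦ (a i : 𝕜)).trace = ∑ i, RCLike.re (A i i) * a i := by
  simp [trace]

lemma sum_le_re_trace_isStarProjection_mul {A P : Matrix ι ι 𝕜} (hA : A.IsHermitian) {s : ι → ℝ}
    (h : A.charpoly = ∏ i, (X - C (s i : 𝕜))) (hP : IsStarProjection P) {S : Finset ι}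
    (hPtr : P.trace = #S) {μ : ℝ} (hS : ∀ i ∈ S, s i ≤ μ) (hSc : ∀ i ∉ S, μ ≤ s i) :
    ∑ i ∈ S, s i ≤ RCLike.re (P * A).trace := by
  obtain ⟨Q, hQ⟩ := exists_conjStarAlgAut_diagonal_eq hA h
  let φ := Unitary.conjStarAlgAut 𝕜 (Matrix ι ι 𝕜) Q
  have hR : IsStarProjection (φ.symm P) := hP.map φ.symm
  have hRtr : ∑ i, RCLike.re (φ.symm P i i) = #S := by
    rw [← map_sum, ← RCLike.natCast_re (K := 𝕜), ← hPtr, ← φ.apply_symm_apply P,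
      trace_conjStarAlgAut]
    simp [trace]
  have hPA : (P * A).trace = (φ.symm P * diagonal fun i ↦ (s i : 𝕜)).trace := by
    rw [← trace_conjStarAlgAut Q (φ.symm P * _), map_mul, hQ]
    exact congrArg (fun B ↦ (B * A).trace) (φ.apply_symm_apply P).symm
  have hneg := sum_mul_le_sum_of_threshold (w := fun i ↦ -s i) (θ := -μ)
    (fun i ↦ re_apply_self_mem_Icc_of_isStarProjection hR i) hRtr
    (fun i hi ↦ neg_le_neg (hS i hi)) (fun i hi ↦ neg_le_neg (hSc i hi))
  rw [hPA, re_trace_mul_diagonal]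
  simpa using hneg

theorem diagonal_add_eq_diagonal_of_charpoly_eq {E : Matrix ι ι 𝕜} (hE : E.IsHermitian) {c : ι → ℝ}
    {S : Finset ι} (hrank : #S + E.rank ≤ Fintype.card ι) {θ μ : ℝ} (hθ : ∀ i ∈ S, θ ≤ c i)
    (hgap : ∀ i ∉ S, c i < θ) (hμ : ∀ i ∈ S, c i ≤ μ)
    (h : (diagonal (fun i ↦ (c i : 𝕜)) + E).charpoly =
      ∏ i, (X - C (S.piecewise c (fun _ ↦ μ) i : 𝕜))) :
    diagonal (fun i ↦ (c i : 𝕜)) + E = diagonal fun i ↦ (S.piecewise c (fun _ ↦ μ) i : 𝕜) := by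
  have hA : (diagonal (fun i ↦ (c i : 𝕜)) + E).IsHermitian := (isHermitian_diagonal_ofReal c).add hE
  obtain ⟨P, hP, hPE, hPtr⟩ := exists_isStarProjection_mul_eq_zero hE hrank
  have hPsum : ∑ i, RCLike.re (P i i) = #S := by
    rw [← map_sum, ← RCLike.natCast_re (K := 𝕜), ← hPtr]
    rfl
  have hkyFan : ∑ i ∈ S, c i ≤ ∑ i, RCLike.re (P i i) * c i := calc
    ∑ i ∈ S, c i = ∑ i ∈ S, S.piecewise c (fun _ ↦ μ) i :=
      sum_congr rfl fun i hi ↦ (piecewise_eq_of_mem _ _ _ hi).symm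
    _ ≤ RCLike.re (P * (diagonal (fun i ↦ (c i : 𝕜)) + E)).trace :=
      sum_le_re_trace_isStarProjection_mul hA h hP hPtr (fun i hi ↦ by simpa [hi] using hμ i hi)
        (fun i hi ↦ by simp [hi])
    _ = ∑ i, RCLike.re (P i i) * c i := by rw [mul_add, hPE, add_zero, re_trace_mul_diagonal]
  have hPdiag := eq_one_of_sum_le_sum_mul
    (re_apply_self_mem_Icc_of_isStarProjection hP) hPsum hθ hgap hkyFan
  refine eq_diagonal_of_charpoly_eq hA h (μ := μ) fun i hi ↦ ?_
  have hiS : i ∈ S := by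
    contrapose! hi
    exact piecewise_eq_of_notMem _ _ _ hi
  rw [Matrix.add_apply, diagonal_apply_eq,
    apply_eq_zero_of_isStarProjection_of_mul_eq_zero hP (hPdiag i hiS) hPE, add_zero,
    piecewise_eq_of_mem _ _ _ hiS]

end

lemma MemU.strictAntiOn_Ioc {f : ℝ → ℝ} (hf : MemU f) : StrictAntiOn f (Set.Ioc 0 1) := by
  obtain ⟨f', hderiv, -, hsign, -⟩ := hf
  refine strictAntiOn_of_deriv_neg (convex_Ioc 0 1)
    (fun x hx ↦ (hderiv x hx.1).continuousAt.continuousWithinAt) fun x hx ↦ ?_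
  rw [interior_Ioc] at hx
  rw [(hderiv x hx.1).deriv]
  exact neg_of_mul_neg_left (hsign x hx.1 hx.2.ne) (sub_nonneg.2 hx.2.le)

lemma MemU.strictMonoOn_Ici {f : ℝ → ℝ} (hf : MemU f) : StrictMonoOn f (Set.Ici 1) := by
  obtain ⟨f', hderiv, -, hsign, -⟩ := hf
  have hpos {x : ℝ} (hx : 1 ≤ x) : 0 < x := one_pos.trans_le hx
  refine strictMonoOn_of_deriv_pos (convex_Ici 1)
    (fun x hx ↦ (hderiv x (hpos hx)).continuousAt.continuousWithinAt) fun x hx ↦ ?_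
  rw [interior_Ici, Set.mem_Ioi] at hx
  rw [(hderiv x (hpos hx.le)).deriv]
  exact pos_of_mul_neg_left (hsign x (hpos hx.le) hx.ne') (sub_nonpos.2 hx.le)

section
open Polynomial

variable {ι : Type*} [DecidableEq ι]

/-- The positive definite square root of `(diagonal d + 1)⁻¹`, for `0 ≤ d`. Congruence by it turns
the pencil `(A, diagonal d + 1)` into a symmetric eigenvalue problem. -/
noncomputable def whitening (d : ι → ℝ) : Matrix ι ι ℝ := diagonal fun i ↦ (√(d i + 1))⁻¹

lemma isHermitian_whitening (d : ι → ℝ) : (whitening d).IsHermitian := isHermitian_diagonal _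

variable [Fintype ι]

lemma isHermitian_whitening_mul_mul_whitening (d : ι → ℝ) {A : Matrix ι ι ℝ} (hA : A.IsHermitian) :
    (whitening d * A * whitening d).IsHermitian := by
  simpa only [(isHermitian_whitening d).eq] using isHermitian_conjTranspose_mul_mul (whitening d) hA

lemma rank_whitening_mul_mul_whitening_le (d : ι → ℝ) (A : Matrix ι ι ℝ) :
    (whitening d * A * whitening d).rank ≤ A.rank :=
  (rank_mul_le_left _ _).trans (rank_mul_le_right _ _)

lemma isUnit_whitening {d : ι → ℝ} (hd : ∀ i, 0 ≤ d i) : IsUnit (whitening d) := by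
  rw [whitening, isUnit_diagonal, Pi.isUnit_iff]
  exact fun i ↦ (inv_ne_zero (Real.sqrt_ne_zero'.2 (by linarith [hd i]))).isUnit

lemma whitening_mul_diagonal_mul_whitening {d : ι → ℝ} (hd : ∀ i, 0 ≤ d i) (a : ι → ℝ) :
    whitening d * diagonal a * whitening d = diagonal fun i ↦ a i / (d i + 1) := by
  rw [whitening, diagonal_mul_diagonal, diagonal_mul_diagonal]
  congr! 2 with i
  rw [mul_right_comm, ← mul_inv, Real.mul_self_sqrt (by linarith [hd i])]
  exact (div_eq_inv_mul _ _).symm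

lemma whitening_mul_self {d : ι → ℝ} (hd : ∀ i, 0 ≤ d i) :
    whitening d * whitening d = (diagonal d + 1)⁻¹ := by
  have hsq : whitening d * whitening d = diagonal fun i ↦ 1 / (d i + 1) := by
    rw [← whitening_mul_diagonal_mul_whitening hd, diagonal_one, Matrix.mul_one]
  refine (inv_eq_left_inv ?_).symm
  rw [hsq, ← diagonal_one, diagonal_add, diagonal_mul_diagonal]
  congr! 2 with i
  exact one_div_mul_cancel (by linarith [hd i])

lemma whitening_mul_add_one_mul_whitening {d : ι → ℝ} (hd : ∀ i, 0 ≤ d i) (E : Matrix ι ι ℝ) :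
    whitening d * (E + 1) * whitening d =
      diagonal (fun i ↦ (d i + 1)⁻¹) + whitening d * E * whitening d := by
  rw [mul_add, add_mul, ← diagonal_one, whitening_mul_diagonal_mul_whitening hd, add_comm]
  simp only [one_div]

end

section
open Polynomial

variable {n : ℕ} {d : Fin n → ℝ}

lemma isGenEigs_iff_charpoly_whitening (hd : ∀ i, 0 ≤ d i) {A : Matrix (Fin n) (Fin n) ℝ}
    {σ : Fin n → ℝ} :
    IsGenEigs A (diagonal d + 1) σ ↔
      (whitening d * A * whitening d).charpoly = ∏ i, (X - C (σ i)) := by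
  rw [IsGenEigs, ← whitening_mul_self hd, Matrix.mul_assoc, charpoly_mul_comm]

/-- The sequence `d₁, …, d_r, 0, …, 0` of the `r` retained entries of `d`. Indices count from `0`,
so `Ici r` consists of the discarded ones. -/
def truncate (r : Fin n) (d : Fin n → ℝ) : Fin n → ℝ := (Ici r).piecewise 0 d

/-- The sequence `1, …, 1, (d_{r+1} + 1)⁻¹, …, (dₙ + 1)⁻¹` of generalized eigenvalues of the pencil
`(diagonal (truncate r d) + 1, diagonal d + 1)`. They turn out to be those of every minimizer. -/
noncomputable def optimalEigs (r : Fin n) (d : Fin n → ℝ) : Fin n → ℝ :=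
  (Ici r).piecewise (fun i ↦ (d i + 1)⁻¹) fun _ ↦ 1

lemma whitening_mul_truncate_add_one_mul_whitening (hd : ∀ i, 0 ≤ d i) (r : Fin n) :
    whitening d * (diagonal (truncate r d) + 1) * whitening d = diagonal (optimalEigs r d) := by
  rw [← diagonal_one, diagonal_add, whitening_mul_diagonal_mul_whitening hd]
  congr! 2 with i
  by_cases hi : i ∈ Ici r
  · simp [truncate, optimalEigs, piecewise_eq_of_mem _ _ _ hi]
  · rw [truncate, optimalEigs, piecewise_eq_of_notMem _ _ _ hi, piecewise_eq_of_notMem _ _ _ hi]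
    exact div_self (by linarith [hd i])

lemma isGenEigs_truncate (hd : ∀ i, 0 ≤ d i) (r : Fin n) :
    IsGenEigs (diagonal (truncate r d) + 1) (diagonal d + 1) (optimalEigs r d) := by
  rw [isGenEigs_iff_charpoly_whitening hd, whitening_mul_truncate_add_one_mul_whitening hd,
    charpoly_diagonal]

lemma exists_mul_transpose_eq_diagonal_truncate (hd : ∀ i, 0 ≤ d i) (r : Fin n) :
    ∃ U : Matrix (Fin n) (Fin r) ℝ, U * Uᵀ = diagonal (truncate r d) := by
  refine ⟨of fun i k ↦ if i = Fin.castLE r.2.le k then √(d i) else 0, ?_⟩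
  ext i j
  simp only [mul_apply, transpose_apply, of_apply]
  rcases lt_or_ge i r with hi | hi
  · rw [sum_eq_single ⟨i, hi⟩ (fun k _ hk ↦ ?_) (by simp)]
    · rcases eq_or_ne i j with rfl | hij
      · simp [truncate, hi, Real.mul_self_sqrt (hd i)]
      · simp [hij, hij.symm]
    · rw [if_neg fun h : i = Fin.castLE r.2.le k ↦ hk (Fin.ext (congrArg Fin.val h).symm),
        zero_mul]
  · have hzero (k : Fin r) : i ≠ Fin.castLE r.2.le k := fun h ↦
      (h ▸ hi : r ≤ Fin.castLE r.2.le k).not_gt k.2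
    simp [hzero, truncate, diagonal_apply, hi]

lemma diagonal_truncate_eq_sum (r : Fin n) (d : Fin n → ℝ) :
    diagonal (truncate r d) =
      ∑ i with i < r, d i • vecMulVec (Pi.single i (1 : ℝ)) (Pi.single i (1 : ℝ)) := by
  simp_rw [← single_eq_single_vecMulVec_single, smul_single, sum_filter, ← sum_single_eq_diagonal]
  refine sum_congr rfl fun i _ ↦ ?_
  rcases lt_or_ge i r with hi | hi
  · simp [truncate, hi]
  · simp [truncate, hi, hi.not_gt]

theorem eq_diagonal_truncate_of_isGenEigs (hd : ∀ i, 0 ≤ d i) (hord : Antitone d)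
    {r : Fin n} (hgap : ∀ i < r, d r < d i) {E : Matrix (Fin n) (Fin n) ℝ} (hE : E.IsHermitian)
    (hrank : E.rank ≤ r) (h : IsGenEigs (E + 1) (diagonal d + 1) (optimalEigs r d)) :
    E = diagonal (truncate r d) := by
  rw [isGenEigs_iff_charpoly_whitening hd, whitening_mul_add_one_mul_whitening hd] at h
  have hcard : #(Ici r) + (whitening d * E * whitening d).rank ≤ Fintype.card (Fin n) := by
    have := (rank_whitening_mul_mul_whitening_le d E).trans hrank
    rw [Fin.card_Ici, Fintype.card_fin]
    lia
  have hdiag : whitening d * (E + 1) * whitening d = diagonal (optimalEigs r d) := by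
    rw [whitening_mul_add_one_mul_whitening hd]
    refine diagonal_add_eq_diagonal_of_charpoly_eq (𝕜 := ℝ) (θ := (d r + 1)⁻¹)
      (isHermitian_whitening_mul_mul_whitening d hE) hcard (fun i hi ↦ ?_) (fun i hi ↦ ?_)
      (fun i _ ↦ ?_) h
    · exact inv_anti₀ (by linarith [hd i]) (by linarith [hord (mem_Ici.1 hi)])
    · exact inv_strictAnti₀ (by linarith [hd r]) (by linarith [hgap i (by simpa using hi)])
    · exact inv_le_one_of_one_le₀ (by linarith [hd i])
  rw [← whitening_mul_truncate_add_one_mul_whitening hd, (isUnit_whitening hd).mul_left_inj,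
    (isUnit_whitening hd).mul_right_inj] at hdiag
  exact add_right_cancel hdiag

lemma apply_le_apply_of_le_or_eq_one {f : ℝ → ℝ} (hf_anti : StrictAntiOn f (Set.Ioc 0 1))
    (hf_one : ∀ x, 1 < x → f 1 < f x) {x y : ℝ} (hx : 0 < x) (hy : y ∈ Set.Ioc 0 1)
    (h : x ≤ y ∨ y = 1) : f y ≤ f x ∧ (f y = f x → x = y) := by
  rcases le_or_gt x y with hxy | hxy
  · have hx' : x ∈ Set.Ioc 0 1 := ⟨hx, hxy.trans hy.2⟩
    exact ⟨hf_anti.antitoneOn hx' hy hxy, fun hf ↦ hf_anti.injOn hx' hy hf.symm⟩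
  · obtain rfl := h.resolve_left hxy.not_ge
    exact ⟨(hf_one x hxy).le, fun hf ↦ absurd hf (hf_one x hxy).ne⟩

lemma le_piecewise_add_or_piecewise_add_eq_one {c l : Fin n → ℝ} {r : Fin n}
    (hlc : ∀ i j : Fin n, (i : ℕ) + r ≤ j → l i ≤ c j) (i : Fin n) :
    l i ≤ (Ici r).piecewise c (fun _ ↦ 1) (i + r) ∨
      (Ici r).piecewise c (fun _ ↦ 1) (i + r) = 1 := by
  -- Addition in `Fin n` is cyclic, so `i + r` wraps around to an index below `r` once `n ≤ i + r`.
  rcases lt_or_ge ((i : ℕ) + r) n with hi | hi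
  · have hval : ((i + r : Fin n) : ℕ) = i + r := by rw [Fin.val_add, Nat.mod_eq_of_lt hi]
    refine .inl ?_
    rw [piecewise_eq_of_mem _ _ _ (mem_Ici.2 (Fin.le_def.2 (by lia)))]
    exact hlc i _ hval.ge
  · have hval : ((i + r : Fin n) : ℕ) = i + r - n := by
      rw [Fin.val_add, Nat.mod_eq_sub_mod hi, Nat.mod_eq_of_lt (by lia)]
    refine .inr (piecewise_eq_of_notMem _ _ _ ?_)
    rw [mem_Ici, Fin.le_def]
    lia

lemma exists_perm_eq_comp_of_sum_le {f : ℝ → ℝ} (hf_anti : StrictAntiOn f (Set.Ioc 0 1))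
    (hf_one : ∀ x, 1 < x → f 1 < f x) {c l : Fin n → ℝ} (hc : ∀ i, c i ∈ Set.Ioc 0 1)
    (hl : ∀ i, 0 < l i) {r : Fin n} (hlc : ∀ i j : Fin n, (i : ℕ) + r ≤ j → l i ≤ c j)
    (hsum : ∑ i, f (l i) ≤ ∑ i, f ((Ici r).piecewise c (fun _ ↦ 1) i)) :
    ∃ e : Equiv.Perm (Fin n), l = (Ici r).piecewise c (fun _ ↦ 1) ∘ e := by
  have : NeZero n := ⟨r.pos.ne'⟩
  set s := (Ici r).piecewise c fun _ ↦ 1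
  have hs (i) : s i ∈ Set.Ioc 0 1 :=
    piecewise_cases (Ici r) c (fun _ ↦ 1) (· ∈ Set.Ioc 0 1) (hc i) ⟨one_pos, le_rfl⟩
  let e : Equiv.Perm (Fin n) := Equiv.addRight r
  have hterm (i) : f (s (e i)) ≤ f (l i) ∧ (f (s (e i)) = f (l i) → l i = s (e i)) :=
    apply_le_apply_of_le_or_eq_one hf_anti hf_one (hl i) (hs _)
      (le_piecewise_add_or_piecewise_add_eq_one hlc i)
  have hsum_eq : ∑ i, f (s (e i)) = ∑ i, f (l i) :=
    (sum_le_sum fun i _ ↦ (hterm i).1).antisymm <|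
      hsum.trans_eq (Equiv.sum_comp e fun i ↦ f (s i)).symm
  exact ⟨e, funext fun i ↦ (hterm i).2 <|
    (sum_eq_sum_iff_of_le fun i _ ↦ (hterm i).1).1 hsum_eq i (mem_univ i)⟩

theorem isGenEigs_optimalEigs_of_forall_sum_le (hd : ∀ i, 0 ≤ d i) (hord : Antitone d)
    {f : ℝ → ℝ} (hf_anti : StrictAntiOn f (Set.Ioc 0 1)) (hf_one : ∀ x, 1 < x → f 1 < f x)
    {r : Fin n} {E : Matrix (Fin n) (Fin n) ℝ} (hE : E.PosSemidef) (hrank : E.rank ≤ r)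
    (hmin : ∀ σ, IsGenEigs (E + 1) (diagonal d + 1) σ →
      ∑ i, f (σ i) ≤ ∑ i, f (optimalEigs r d i)) :
    IsGenEigs (E + 1) (diagonal d + 1) (optimalEigs r d) := by
  have hpos : (whitening d * (E + 1) * whitening d).PosDef := by
    have := (isUnit_whitening hd).posDef_star_left_conjugate_iff.2 (PosDef.one.posSemidef_add hE)
    rwa [star_eq_conjTranspose, (isHermitian_whitening d).eq] at this
  obtain ⟨l, hl_mono, hl⟩ := exists_monotone_charpoly_eq hpos.isHermitian
  have hinterlace (i j : Fin n) (hij : (i : ℕ) + r ≤ j) : l i ≤ (d j + 1)⁻¹ := by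
    refine eigenvalue_le_eigenvalue_of_add_rank_sub_le hpos.isHermitian
      (isHermitian_diagonal fun i ↦ (d i + 1)⁻¹) hl (charpoly_diagonal _) hl_mono ?_ ?_
    · exact fun i j hij ↦ inv_anti₀ (by linarith [hd j]) (by linarith [hord hij])
    · rw [whitening_mul_add_one_mul_whitening hd, add_sub_cancel_left]
      exact (Nat.add_le_add_left ((rank_whitening_mul_mul_whitening_le d E).trans hrank) _).trans
        hij
  have hl_eigs : IsGenEigs (E + 1) (diagonal d + 1) l :=
    (isGenEigs_iff_charpoly_whitening hd).2 hl
  obtain ⟨e, rfl⟩ := exists_perm_eq_comp_of_sum_le hf_anti hf_one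
    (fun i ↦ ⟨inv_pos.2 (by linarith [hd i]), inv_le_one_of_one_le₀ (by linarith [hd i])⟩)
    (pos_of_posDef_of_charpoly_eq hpos hl) hinterlace (hmin l hl_eigs)
  exact hl_eigs.trans (Equiv.prod_comp e fun i ↦ X - C (optimalEigs r d i))

end

theorem approximation_lemma_uniqueness_general
    {n : ℕ} {r : Fin n} {dsq : Fin n → ℝ} (hd : ∀ i, 0 ≤ dsq i) (hord : Antitone dsq)
    (hgap : ∀ i < r, dsq r < dsq i)
    {f : ℝ → ℝ} (hf_anti : StrictAntiOn f (Set.Ioc 0 1)) (hf_one : ∀ x, 1 < x → f 1 < f x)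
    {Uhat : Matrix (Fin n) (Fin r) ℝ}
    (hmin : ∀ U : Matrix (Fin n) (Fin r) ℝ, ∀ σ σ' : Fin n → ℝ,
      IsGenEigs (Uhat * Uhatᵀ + 1) (diagonal dsq + 1) σ →
      IsGenEigs (U * Uᵀ + 1) (diagonal dsq + 1) σ' →
      ∑ i, f (σ i) ≤ ∑ i, f (σ' i)) :
    Uhat * Uhatᵀ = ∑ i with i < r,
      dsq i • vecMulVec (Pi.single i (1 : ℝ)) (Pi.single i (1 : ℝ)) := by
  obtain ⟨U₀, hU₀⟩ := exists_mul_transpose_eq_diagonal_truncate hd r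
  have hU₀_eigs : IsGenEigs (U₀ * U₀ᵀ + 1) (diagonal dsq + 1) (optimalEigs r dsq) := by
    rw [hU₀]
    exact isGenEigs_truncate hd _
  have hpos : (Uhat * Uhatᵀ).PosSemidef := posSemidef_self_mul_conjTranspose Uhat
  have hrank : (Uhat * Uhatᵀ).rank ≤ r :=
    (rank_mul_le_left _ _).trans (rank_le_width Uhat)
  have hUhat_eigs : IsGenEigs (Uhat * Uhatᵀ + 1) (diagonal dsq + 1) (optimalEigs r dsq) :=
    isGenEigs_optimalEigs_of_forall_sum_le hd hord hf_anti hf_one hpos hrank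
      fun σ hσ ↦ hmin U₀ σ _ hσ hU₀_eigs
  rw [eq_diagonal_truncate_of_isGenEigs hd hord hgap hpos.isHermitian hrank hUhat_eigs]
  exact diagonal_truncate_eq_sum _ _

/-- Lemma A.1 (ii) (approximation lemma, uniqueness): if `d₁² > d₂² > ⋯ > d_{r+1}²`, then
every global minimizer `Û` of `𝒥` satisfies `Û Ûᵀ = Σ_{i≤r} dᵢ² eᵢ eᵢᵀ`. -/
theorem approximation_lemma_uniqueness
    (n r : ℕ) (hn : 0 < n) (hrpos : 0 < r) (hr : r < n)
    (dsq : Fin n → ℝ) (hd : ∀ i, 0 ≤ dsq i) (hord : Antitone dsq)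
    (hstrict : ∀ i j : Fin n, i < j → (j : ℕ) ≤ r → dsq j < dsq i)
    (f : ℝ → ℝ) (hf : MemU f) :
    ∀ Uhat : Matrix (Fin n) (Fin r) ℝ,
      (∀ U : Matrix (Fin n) (Fin r) ℝ, ∀ σ σ' : Fin n → ℝ,
        IsGenEigs (Uhat * Uhatᵀ + 1) (Matrix.diagonal dsq + 1) σ →
        IsGenEigs (U * Uᵀ + 1) (Matrix.diagonal dsq + 1) σ' →
        ∑ i, f (σ i) ≤ ∑ i, f (σ' i)) →
      Uhat * Uhatᵀ = ∑ i ∈ Finset.univ.filter (fun i : Fin n => (i : ℕ) < r),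
        dsq i • vecMulVec (Pi.single i (1:ℝ)) (Pi.single i (1:ℝ)) :=
  fun _ hmin ↦ approximation_lemma_uniqueness_general (r := ⟨r, hr⟩) hd hord
    (fun i hi ↦ hstrict i ⟨r, hr⟩ hi le_rfl) hf.strictAntiOn_Ioc
    (fun _ hx ↦ hf.strictMonoOn_Ici Set.self_mem_Ici hx.le hx) hmin
end

section
/- Let Γ_pr be an n×n symmetric positive definite matrix. For any real n×k matrix K such that Γ_pr − K Kᵀ is positive definite, there exists a real n×k matrix U with rank(U) = rank(K) such that Γ_pr − K Kᵀ = ( Γ_pr⁻¹ + U Uᵀ )⁻¹. Conversely, for any real n×k matrix U there exists a real n×k matrix K with rank(K) = rank(U) such that ( Γ_pr⁻¹ + U Uᵀ )⁻¹ = Γ_pr − K Kᵀ (and in particular Γ_pr − K Kᵀ is positive definite). -/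
open Matrix

/-!
By the Woodbury identity, inverting `A + U Uᴴ` subtracts `A⁻¹ U S Uᴴ A⁻¹` from `A⁻¹`, where
`S = (1 + Uᴴ A⁻¹ U)⁻¹` is positive definite. Writing `S = B Bᴴ` with `B` invertible, this is
`K Kᴴ` for `K = A⁻¹ U B`, and `K` has the rank of `U`. Taking `A = Γ⁻¹` gives `K` from `U`; for the
other direction one takes `A = Γ - K Kᴴ`, so that `A + K Kᴴ = Γ`.
-/

section CommRing

variable {R m n : Type*} [CommRing R] [Fintype m] [Fintype n] [DecidableEq m]

theorem inv_inv_of_isUnit {A : Matrix m m R} (hA : IsUnit A) : A⁻¹⁻¹ = A :=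
  nonsing_inv_nonsing_inv A ((isUnit_iff_isUnit_det A).mp hA)

theorem inv_add_mul_eq_sub [DecidableEq n] {A : Matrix m m R} {U : Matrix m n R}
    {V : Matrix n m R} (hA : IsUnit A) (hS : IsUnit (1 + V * A⁻¹ * U)) :
    (A + U * V)⁻¹ = A⁻¹ - A⁻¹ * U * (1 + V * A⁻¹ * U)⁻¹ * V * A⁻¹ := by
  simpa using add_mul_mul_inv_eq_sub A U 1 V hA isUnit_one (by simpa using hS)

theorem rank_mul_mul_of_isUnit [DecidableEq n] {A : Matrix m m R} {B : Matrix n n R}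
    (hA : IsUnit A) (hB : IsUnit B) (U : Matrix m n R) : (A * U * B).rank = U.rank := by
  rw [isUnit_iff_isUnit_det] at hA hB
  rw [rank_mul_eq_left_of_isUnit_det _ _ hB, rank_mul_eq_right_of_isUnit_det _ _ hA]

end CommRing

section RCLike

open scoped ComplexOrder

variable {𝕜 m n : Type*} [RCLike 𝕜] [Fintype m] [Fintype n] [DecidableEq m]

open scoped MatrixOrder in
theorem exists_isUnit_eq_mul_conjTranspose_of_posDef {S : Matrix m m 𝕜} (hS : S.PosDef) :
    ∃ B : Matrix m m 𝕜, IsUnit B ∧ S = B * Bᴴ := by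
  obtain ⟨C, hC, hSC⟩ :=
    CStarAlgebra.isStrictlyPositive_iff_eq_star_mul_self.mp hS.isStrictlyPositive
  exact ⟨Cᴴ, hC.star, by rw [conjTranspose_conjTranspose, hSC, star_eq_conjTranspose]⟩

theorem exists_rank_eq_and_inv_add_eq_sub {A : Matrix m m 𝕜} (hA : A.PosDef)
    (U : Matrix m n 𝕜) :
    ∃ K : Matrix m n 𝕜, K.rank = U.rank ∧ (A + U * Uᴴ)⁻¹ = A⁻¹ - K * Kᴴ := by
  classical
  have hS : (1 + Uᴴ * A⁻¹ * U).PosDef :=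
    PosDef.one.add_posSemidef (hA.inv.posSemidef.conjTranspose_mul_mul_same U)
  obtain ⟨B, hB, hSB⟩ := exists_isUnit_eq_mul_conjTranspose_of_posDef hS.inv
  refine ⟨A⁻¹ * U * B, rank_mul_mul_of_isUnit hA.inv.isUnit hB U, ?_⟩
  calc (A + U * Uᴴ)⁻¹
      = A⁻¹ - A⁻¹ * U * (B * Bᴴ) * Uᴴ * A⁻¹ := by
        rw [inv_add_mul_eq_sub hA.isUnit hS.isUnit, hSB]
    _ = A⁻¹ - A⁻¹ * U * B * (A⁻¹ * U * B)ᴴ := by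
        simp only [conjTranspose_mul, hA.inv.isHermitian.eq, Matrix.mul_assoc]

theorem exists_rank_eq_and_sub_eq_inv_add {Γ : Matrix m m 𝕜} {K : Matrix m n 𝕜}
    (hK : (Γ - K * Kᴴ).PosDef) :
    ∃ U : Matrix m n 𝕜, U.rank = K.rank ∧ Γ - K * Kᴴ = (Γ⁻¹ + U * Uᴴ)⁻¹ := by
  obtain ⟨U, hrank, hU⟩ := exists_rank_eq_and_inv_add_eq_sub hK K
  rw [sub_add_cancel] at hU
  exact ⟨U, hrank, by rw [hU, sub_add_cancel, inv_inv_of_isUnit hK.isUnit]⟩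

theorem prior_updates_bijection_general {Γ : Matrix m m 𝕜} (hΓ : Γ.PosDef) :
    (∀ K : Matrix m n 𝕜, (Γ - K * Kᴴ).PosDef →
      ∃ U : Matrix m n 𝕜, U.rank = K.rank ∧ Γ - K * Kᴴ = (Γ⁻¹ + U * Uᴴ)⁻¹) ∧
    (∀ U : Matrix m n 𝕜,
      ∃ K : Matrix m n 𝕜, K.rank = U.rank ∧
        (Γ⁻¹ + U * Uᴴ)⁻¹ = Γ - K * Kᴴ ∧ (Γ - K * Kᴴ).PosDef) := by
  refine ⟨fun K hK ↦ exists_rank_eq_and_sub_eq_inv_add hK, fun U ↦ ?_⟩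
  obtain ⟨K, hrank, hK⟩ := exists_rank_eq_and_inv_add_eq_sub hΓ.inv U
  rw [inv_inv_of_isUnit hΓ.isUnit] at hK
  have hpos : (Γ⁻¹ + U * Uᴴ)⁻¹.PosDef :=
    (hΓ.inv.add_posSemidef (posSemidef_self_mul_conjTranspose U)).inv
  exact ⟨K, hrank, hK, hK ▸ hpos⟩

end RCLike

/-- Lemma A.2 (prior updates): every positive definite negative semidefinite update
`Γpr − K Kᵀ` of the prior can be written as `(Γpr⁻¹ + U Uᵀ)⁻¹` with `rank U = rank K`,
and conversely. -/
theorem prior_updates_bijection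
    (n k : ℕ) (hn : 0 < n) (hk : 0 < k)
    (Γpr : Matrix (Fin n) (Fin n) ℝ) (hpr : Γpr.PosDef) :
    (∀ K : Matrix (Fin n) (Fin k) ℝ, (Γpr - K * Kᵀ).PosDef →
      ∃ U : Matrix (Fin n) (Fin k) ℝ, U.rank = K.rank ∧
        Γpr - K * Kᵀ = (Γpr⁻¹ + U * Uᵀ)⁻¹) ∧
    (∀ U : Matrix (Fin n) (Fin k) ℝ,
      ∃ K : Matrix (Fin n) (Fin k) ℝ, K.rank = U.rank ∧
        (Γpr⁻¹ + U * Uᵀ)⁻¹ = Γpr - K * Kᵀ ∧ (Γpr - K * Kᵀ).PosDef) := by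
  simpa only [conjTranspose_eq_transpose_of_trivial] using
    prior_updates_bijection_general (n := Fin k) hpr
end

section
/- Let S_pr and S_obs be invertible matrices with Γ_pr = S_pr S_prᵀ and Γ_obs = S_obs S_obsᵀ, and let W D Vᵀ be a singular value decomposition of the n×m matrix S_prᵀ Gᵀ S_obs⁻ᵀ (with W an n×n orthogonal matrix, V an m×m orthogonal matrix, and D an n×m matrix with the singular values on its diagonal). Then S_pos = S_pr W (I + D Dᵀ)^{−1/2} Wᵀ satisfies S_pos S_posᵀ = Γ_pos = (Gᵀ Γ_obs⁻¹ G + Γ_pr⁻¹)⁻¹, and S_y = S_obs V (I + Dᵀ D)^{1/2} Vᵀ satisfies S_y S_yᵀ = Γ_y = Γ_obs + G Γ_pr Gᵀ. -/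
open Matrix

/-!
Whitening both spaces turns the forward operator into `A = Sobs⁻¹ G Spr`, for which
`Γpos = Spr (1 + Aᴴ A)⁻¹ Sprᴴ` and `Γy = Sobs (1 + A Aᴴ) Sobsᴴ`. A factorization `Aᴴ = W D Vᴴ` with
`W` and `V` unitary conjugates the middle factors into `1 + D Dᴴ` and `1 + Dᴴ D`, so square roots
of these two matrices yield square roots of the covariances.
-/

section Conjugation

variable {k l m n 𝕜 : Type*} [Fintype m] [Fintype n] [DecidableEq n] [CommRing 𝕜] [StarRing 𝕜]

theorem mul_mul_conjTranspose_mul_conjTranspose_self [Fintype l] (A : Matrix k m 𝕜)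
    (X : Matrix m n 𝕜) {V : Matrix l n 𝕜} (hV : Vᴴ * V = 1) :
    (A * X * Vᴴ) * (A * X * Vᴴ)ᴴ = A * (X * Xᴴ) * Aᴴ :=
  calc (A * X * Vᴴ) * (A * X * Vᴴ)ᴴ = A * X * (Vᴴ * V) * Xᴴ * Aᴴ := by
        simp only [conjTranspose_mul, conjTranspose_conjTranspose, Matrix.mul_assoc]
    _ = A * (X * Xᴴ) * Aᴴ := by
        rw [hV, Matrix.mul_one, Matrix.mul_assoc A]

theorem one_add_mul_conjTranspose_self_eq_conj [Fintype l] [DecidableEq k] [DecidableEq m]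
    {W : Matrix k m 𝕜} (hW : W * Wᴴ = 1) (D : Matrix m n 𝕜) {V : Matrix l n 𝕜} (hV : Vᴴ * V = 1) :
    1 + (W * D * Vᴴ) * (W * D * Vᴴ)ᴴ = W * (1 + D * Dᴴ) * Wᴴ := by
  rw [mul_mul_conjTranspose_mul_conjTranspose_self W D hV, Matrix.mul_add, Matrix.add_mul,
    Matrix.mul_one, hW]

end Conjugation

open scoped ComplexOrder in
theorem inv_mul_conjTranspose_inv_mul_one_add_mul_conjTranspose {m n 𝕜 : Type*} [Fintype m]
    [Fintype n] [DecidableEq n] [RCLike 𝕜] {R : Matrix n n 𝕜} {D : Matrix n m 𝕜}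
    (hR : Rᴴ * R = 1 + D * Dᴴ) : R⁻¹ * (R⁻¹)ᴴ * (1 + D * Dᴴ) = 1 := by
  have hpos : (1 + D * Dᴴ).PosDef := PosDef.one.add_posSemidef (posSemidef_self_mul_conjTranspose D)
  have hinv : R⁻¹ * (R⁻¹)ᴴ = (1 + D * Dᴴ)⁻¹ := by
    rw [← hR, Matrix.mul_inv_rev, conjTranspose_nonsing_inv]
  rw [hinv, nonsing_inv_mul _ ((isUnit_iff_isUnit_det _).mp hpos.isUnit)]

section Whitening

variable {m n 𝕜 : Type*} [Fintype m] [DecidableEq m] [Fintype n] [CommRing 𝕜] [StarRing 𝕜]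

/-- The adjoint of the forward operator `G` in coordinates in which the prior covariance
`Spr * Sprᴴ` and the noise covariance `Sobs * Sobsᴴ` are identity matrices. The adjoint, rather
than `Sobs⁻¹ * G * Spr` itself, is the matrix whose singular value decomposition is used. -/
noncomputable def whitenedAdjoint (G : Matrix m n 𝕜) (Spr : Matrix n n 𝕜) (Sobs : Matrix m m 𝕜) :
    Matrix n m 𝕜 :=
  Sprᴴ * Gᴴ * (Sobs⁻¹)ᴴ

theorem conjTranspose_whitenedAdjoint (G : Matrix m n 𝕜) (Spr : Matrix n n 𝕜)
    (Sobs : Matrix m m 𝕜) : (whitenedAdjoint G Spr Sobs)ᴴ = Sobs⁻¹ * G * Spr := by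
  simp only [whitenedAdjoint, conjTranspose_mul, conjTranspose_conjTranspose, Matrix.mul_assoc]

theorem marginalCovariance_eq_whitened (G : Matrix m n 𝕜) (Spr : Matrix n n 𝕜)
    {Sobs : Matrix m m 𝕜} (hSobs : IsUnit Sobs.det) :
    Sobs * Sobsᴴ + G * (Spr * Sprᴴ) * Gᴴ =
      Sobs * (1 + (whitenedAdjoint G Spr Sobs)ᴴ * whitenedAdjoint G Spr Sobs) * Sobsᴴ := by
  set B := whitenedAdjoint G Spr Sobs with hB
  have hGSpr : G * Spr = Sobs * Bᴴ := by
    rw [hB, conjTranspose_whitenedAdjoint, Matrix.mul_assoc,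
      mul_nonsing_inv_cancel_left _ _ hSobs]
  calc Sobs * Sobsᴴ + G * (Spr * Sprᴴ) * Gᴴ
      = Sobs * Sobsᴴ + (G * Spr) * (G * Spr)ᴴ := by
        simp only [conjTranspose_mul, Matrix.mul_assoc]
    _ = Sobs * (1 + Bᴴ * B) * Sobsᴴ := by
        simp only [hGSpr, conjTranspose_mul, conjTranspose_conjTranspose, Matrix.mul_add,
          Matrix.add_mul, Matrix.mul_one, Matrix.mul_assoc]

variable [DecidableEq n]

theorem posteriorPrecision_eq_whitened (G : Matrix m n 𝕜) {Spr : Matrix n n 𝕜}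
    (hSpr : IsUnit Spr.det) (Sobs : Matrix m m 𝕜) :
    Gᴴ * (Sobs * Sobsᴴ)⁻¹ * G + (Spr * Sprᴴ)⁻¹ =
      (Spr⁻¹)ᴴ * (1 + whitenedAdjoint G Spr Sobs * (whitenedAdjoint G Spr Sobs)ᴴ) * Spr⁻¹ := by
  set B := whitenedAdjoint G Spr Sobs with hB
  have hSobsG : Sobs⁻¹ * G = Bᴴ * Spr⁻¹ := by
    rw [hB, conjTranspose_whitenedAdjoint, mul_nonsing_inv_cancel_right _ _ hSpr]
  calc Gᴴ * (Sobs * Sobsᴴ)⁻¹ * G + (Spr * Sprᴴ)⁻¹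
      = (Sobs⁻¹ * G)ᴴ * (Sobs⁻¹ * G) + (Spr⁻¹)ᴴ * Spr⁻¹ := by
        simp only [Matrix.mul_inv_rev, conjTranspose_mul, conjTranspose_nonsing_inv,
          Matrix.mul_assoc]
    _ = (Spr⁻¹)ᴴ * (1 + B * Bᴴ) * Spr⁻¹ := by
        simp only [hSobsG, conjTranspose_mul, conjTranspose_conjTranspose, Matrix.mul_add,
          Matrix.add_mul, Matrix.mul_one, Matrix.mul_assoc, add_comm]

theorem posteriorCovariance_eq_whitened (G : Matrix m n 𝕜) {Spr : Matrix n n 𝕜}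
    (hSpr : IsUnit Spr.det) (Sobs : Matrix m m 𝕜) :
    (Gᴴ * (Sobs * Sobsᴴ)⁻¹ * G + (Spr * Sprᴴ)⁻¹)⁻¹ =
      Spr * (1 + whitenedAdjoint G Spr Sobs * (whitenedAdjoint G Spr Sobs)ᴴ)⁻¹ * Sprᴴ := by
  have hSprH : IsUnit Sprᴴ.det := by rw [det_conjTranspose]; exact hSpr.star
  rw [posteriorPrecision_eq_whitened G hSpr, Matrix.mul_inv_rev, Matrix.mul_inv_rev,
    nonsing_inv_nonsing_inv _ hSpr, conjTranspose_nonsing_inv, nonsing_inv_nonsing_inv _ hSprH,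
    ← Matrix.mul_assoc]

section SquareRoots

variable {G : Matrix m n 𝕜} {Spr W T : Matrix n n 𝕜} {Sobs V Q : Matrix m m 𝕜} {D : Matrix n m 𝕜}

theorem posteriorCovariance_squareRoot (hSpr : IsUnit Spr.det) (hW : W ∈ unitaryGroup n 𝕜)
    (hV : V ∈ unitaryGroup m 𝕜) (hsvd : whitenedAdjoint G Spr Sobs = W * D * Vᴴ)
    (hT : T * Tᴴ * (1 + D * Dᴴ) = 1) :
    (Spr * W * T * Wᴴ) * (Spr * W * T * Wᴴ)ᴴ =
      (Gᴴ * (Sobs * Sobsᴴ)⁻¹ * G + (Spr * Sprᴴ)⁻¹)⁻¹ := by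
  have hWW : Wᴴ * W = 1 := mem_unitaryGroup_iff'.mp hW
  have hWW' : W * Wᴴ = 1 := mem_unitaryGroup_iff.mp hW
  have hinv : (W * (1 + D * Dᴴ) * Wᴴ)⁻¹ = W * (T * Tᴴ) * Wᴴ := by
    rw [Matrix.mul_inv_rev, Matrix.mul_inv_rev, inv_eq_left_inv hT, inv_eq_left_inv hWW,
      inv_eq_left_inv hWW', ← Matrix.mul_assoc]
  rw [mul_mul_conjTranspose_mul_conjTranspose_self _ T hWW, posteriorCovariance_eq_whitened G hSpr,
    hsvd, one_add_mul_conjTranspose_self_eq_conj hWW' D (mem_unitaryGroup_iff'.mp hV), hinv]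
  simp only [conjTranspose_mul, Matrix.mul_assoc]

theorem marginalCovariance_squareRoot (hSobs : IsUnit Sobs.det) (hW : W ∈ unitaryGroup n 𝕜)
    (hV : V ∈ unitaryGroup m 𝕜) (hsvd : whitenedAdjoint G Spr Sobs = W * D * Vᴴ)
    (hQ : Q * Qᴴ = 1 + Dᴴ * D) :
    (Sobs * V * Q * Vᴴ) * (Sobs * V * Q * Vᴴ)ᴴ = Sobs * Sobsᴴ + G * (Spr * Sprᴴ) * Gᴴ := by
  have hmid : 1 + (W * D * Vᴴ)ᴴ * (W * D * Vᴴ) = V * (Q * Qᴴ) * Vᴴ := by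
    simpa only [conjTranspose_mul, conjTranspose_conjTranspose, Matrix.mul_assoc, hQ] using
      one_add_mul_conjTranspose_self_eq_conj (mem_unitaryGroup_iff.mp hV) Dᴴ
        (mem_unitaryGroup_iff'.mp hW)
  rw [mul_mul_conjTranspose_mul_conjTranspose_self _ Q (mem_unitaryGroup_iff'.mp hV),
    marginalCovariance_eq_whitened G Spr hSobs, hsvd, hmid]
  simp only [conjTranspose_mul, Matrix.mul_assoc]

end SquareRoots

-- `T` stands for `(1 + D Dᴴ)^{-1/2}`; stating `hT` as a product avoids the junk value of `⁻¹`
-- at a singular matrix, since `1 + D Dᴴ` need not be invertible over a general star ring.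
theorem square_roots_of_posterior_and_marginal_covariance_general
    (G : Matrix m n 𝕜) (Γobs : Matrix m m 𝕜) (Γpr Γpos : Matrix n n 𝕜)
    (hΓpos : Γpos = (Gᴴ * Γobs⁻¹ * G + Γpr⁻¹)⁻¹)
    (Γy : Matrix m m 𝕜) (hΓy : Γy = Γobs + G * Γpr * Gᴴ)
    (Spr : Matrix n n 𝕜) (hSprInv : IsUnit Spr.det) (hSpr : Γpr = Spr * Sprᴴ)
    (Sobs : Matrix m m 𝕜) (hSobsInv : IsUnit Sobs.det) (hSobs : Γobs = Sobs * Sobsᴴ)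
    (W : Matrix n n 𝕜) (hW : W ∈ unitaryGroup n 𝕜)
    (V : Matrix m m 𝕜) (hV : V ∈ unitaryGroup m 𝕜)
    (D : Matrix n m 𝕜) (hsvd : Sprᴴ * Gᴴ * (Sobs⁻¹)ᴴ = W * D * Vᴴ)
    (T : Matrix n n 𝕜) (hT : T * Tᴴ * (1 + D * Dᴴ) = 1)
    (Q : Matrix m m 𝕜) (hQ : Q * Qᴴ = 1 + Dᴴ * D) :
    (Spr * W * T * Wᴴ) * (Spr * W * T * Wᴴ)ᴴ = Γpos ∧
      (Sobs * V * Q * Vᴴ) * (Sobs * V * Q * Vᴴ)ᴴ = Γy := by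
  subst hΓpos hΓy hSpr hSobs
  exact ⟨posteriorCovariance_squareRoot hSprInv hW hV hsvd hT,
    marginalCovariance_squareRoot hSobsInv hW hV hsvd hQ⟩

end Whitening

/-- Lemma A.3 (square roots): given factorizations `Γpr = Spr Sprᵀ`, `Γobs = Sobs Sobsᵀ`
and an SVD `Sprᵀ Gᵀ Sobs⁻ᵀ = W D Vᵀ`, the matrices
`Spos = Spr W (I + D Dᵀ)^{−1/2} Wᵀ` and `Sy = Sobs V (I + Dᵀ D)^{1/2} Vᵀ` are square roots
of the posterior covariance `Γpos` and the marginal data covariance `Γy`, respectively.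
The symmetric positive semidefinite square roots `(I + D Dᵀ)^{1/2}` and `(I + Dᵀ D)^{1/2}`
are encoded by quantifying over any positive semidefinite `R`, `Q` with `R R = I + D Dᵀ`
and `Q Q = I + Dᵀ D` (such square roots are unique). -/
theorem square_roots_of_posterior_and_marginal_covariance
    (n m : ℕ) (hn : 0 < n) (hm : 0 < m)
    (G : Matrix (Fin m) (Fin n) ℝ)
    (Γobs : Matrix (Fin m) (Fin m) ℝ) (hobs : Γobs.PosDef)
    (Γpr : Matrix (Fin n) (Fin n) ℝ) (hpr : Γpr.PosDef)
    (Γpos : Matrix (Fin n) (Fin n) ℝ)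
    (hΓpos : Γpos = (Gᵀ * Γobs⁻¹ * G + Γpr⁻¹)⁻¹)
    (Γy : Matrix (Fin m) (Fin m) ℝ)
    (hΓy : Γy = Γobs + G * Γpr * Gᵀ)
    (Spr : Matrix (Fin n) (Fin n) ℝ) (hSprInv : IsUnit Spr.det)
    (hSpr : Γpr = Spr * Sprᵀ)
    (Sobs : Matrix (Fin m) (Fin m) ℝ) (hSobsInv : IsUnit Sobs.det)
    (hSobs : Γobs = Sobs * Sobsᵀ)
    (W : Matrix (Fin n) (Fin n) ℝ) (hW : W * Wᵀ = 1) (hW' : Wᵀ * W = 1)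
    (V : Matrix (Fin m) (Fin m) ℝ) (hV : V * Vᵀ = 1) (hV' : Vᵀ * V = 1)
    (D : Matrix (Fin n) (Fin m) ℝ)
    (hDdiag : ∀ (i : Fin n) (j : Fin m), (i : ℕ) ≠ (j : ℕ) → D i j = 0)
    (hDnonneg : ∀ (i : Fin n) (j : Fin m), (i : ℕ) = (j : ℕ) → 0 ≤ D i j)
    (hsvd : Sprᵀ * Gᵀ * (Sobs⁻¹)ᵀ = W * D * Vᵀ) :
    ∀ R : Matrix (Fin n) (Fin n) ℝ, R.PosSemidef → R * R = 1 + D * Dᵀ →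
    ∀ Q : Matrix (Fin m) (Fin m) ℝ, Q.PosSemidef → Q * Q = 1 + Dᵀ * D →
      (Spr * W * R⁻¹ * Wᵀ) * (Spr * W * R⁻¹ * Wᵀ)ᵀ = Γpos ∧
      (Sobs * V * Q * Vᵀ) * (Sobs * V * Q * Vᵀ)ᵀ = Γy := by
  intro R hR hRR Q hQ hQQ
  simp only [← conjTranspose_eq_transpose_of_trivial] at *
  exact square_roots_of_posterior_and_marginal_covariance_general G Γobs Γpr Γpos hΓpos Γy hΓy
    Spr hSprInv hSpr Sobs hSobsInv hSobs W ⟨hW', hW⟩ V ⟨hV', hV⟩ D hsvd R⁻¹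
    (inv_mul_conjTranspose_inv_mul_one_add_mul_conjTranspose (hR.isHermitian.eq.symm ▸ hRR))
    Q (hQ.isHermitian.eq.symm ▸ hQQ)
end
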